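/- Let L be a first-order language and let M and N be L-structures. Then Th_{∀∃}(M) ⊆ Th_{∀∃}(N) if and only if: there exists an elementary extension N* of N such that for every finite subset B of N* there exist an elementary extension M_B of M and an L-embedding f_B : M_B → N* with B contained in the image of f_B. -/

import Mathlib

open FirstOrder Language

universe u v w x

/-- Apply existential quantifiers to the last `s` bound variables of a bounded formula. -/
def FirstOrder.Language.BoundedFormula.exsN {L : FirstOrder.Language} {α : Type*} {m : ℕ} :
    ∀ {s : ℕ}, L.BoundedFormula α (m + s) → L.BoundedFormula α m
  | 0, φ => φ
  | _ + 1, φ => φ.ex.exsN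

/-- `Th_{∀∃}(M) ⊆ Th_{∀∃}(N)`: every sentence of the form `∀ x₁ … xₘ ∃ y₁ … yₛ ψ` with `ψ`
quantifier-free that holds in `M` also holds in `N`. -/
def AETheorySub (L : FirstOrder.Language) (M : Type*) (N : Type*)
    [L.Structure M] [L.Structure N] : Prop :=
  ∀ (m s : ℕ) (ψ : L.BoundedFormula Empty (m + s)), ψ.IsQF →
    M ⊨ (ψ.exsN.alls : L.Sentence) → N ⊨ (ψ.exsN.alls : L.Sentence)

/-!
Realizations of quantifier-free formulas in `M` by Skolem functions `(β → M) → M` transfer, finitely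
many formulas at a time, to witnesses in `N` over any tuple `b : β → N`. Along an ultrafilter `V` on
the finite sets of quantifier-free formulas these witnesses assemble, over any tuple `b` of the
ultrapower `N*` of `N` by `V`, into realizations of all formulas at once. The finite stages also
provide tuples in `β → M`; the push-forward of `V` along them gives an ultrapower of `M` whose
elements are the classes of the functions `(β → M) → M`, and sending such a function to its witness
embeds this ultrapower in `N*` and maps the coordinate projections to `b`. One `N*` thus serves all
tuples, and `β = ℕ` covers every finite, indeed every countable, subset.

Conversely, a universal-existential sentence goes up to `M_B`; its existential part, at a tuple
whose image is `B`, is preserved by `f_B`; and the sentence goes down from `N*` to `N`.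
-/

open Filter

universe y z

section Formulas

variable {L : FirstOrder.Language.{u, v}} {M : Type*} [L.Structure M] {α β : Type*}

theorem realize_exsN {m : ℕ} :
    ∀ {s : ℕ} (φ : L.BoundedFormula α (m + s)) (v : α → M) (xs : Fin m → M),
      φ.exsN.Realize v xs ↔ ∃ ys : Fin s → M, φ.Realize v (Fin.append xs ys)
  | 0, φ, v, xs => by
      have append_nil (ys : Fin 0 → M) : Fin.append xs ys = xs :=
        funext fun i => Fin.append_left xs ys i
      simp only [BoundedFormula.exsN, append_nil, exists_const]
  | s + 1, φ, v, xs => by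
      rw [BoundedFormula.exsN, realize_exsN]
      simp only [BoundedFormula.realize_ex]
      constructor
      · rintro ⟨ys, a, h⟩
        exact ⟨Fin.snoc ys a, by rwa [Fin.append_snoc]⟩
      · rintro ⟨ys, h⟩
        refine ⟨Fin.init ys, ys (Fin.last s), ?_⟩
        rwa [← Fin.append_snoc, Fin.snoc_init_self]

theorem realize_alls_exsN {m s : ℕ} (ψ : L.BoundedFormula Empty (m + s)) :
    M ⊨ (ψ.exsN.alls : L.Sentence) ↔
      ∀ xs : Fin m → M, ∃ ys : Fin s → M, ψ.Realize default (Fin.append xs ys) :=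
  BoundedFormula.realize_alls.trans (forall_congr' fun _ => realize_exsN _ _ _)

theorem isQF_iSup [Finite β] {n : ℕ} {f : β → L.BoundedFormula α n} (hf : ∀ b, (f b).IsQF) :
    (BoundedFormula.iSup f).IsQF := by
  have isQF_foldr (l : List β) : ((l.map f).foldr (· ⊔ ·) ⊥).IsQF := by
    induction l with
    | nil => exact BoundedFormula.isQF_bot
    | cons b l ih => exact (hf b).sup ih
  exact isQF_foldr _

theorem isQF_iInf [Finite β] {n : ℕ} {f : β → L.BoundedFormula α n} (hf : ∀ b, (f b).IsQF) :
    (BoundedFormula.iInf f).IsQF := by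
  have isQF_foldr (l : List β) : ((l.map f).foldr (· ⊓ ·) ⊤).IsQF := by
    induction l with
    | nil => exact BoundedFormula.IsQF.top
    | cons b l ih => exact (hf b).inf ih
  exact isQF_foldr _

theorem isQF_restrictFreeVar [DecidableEq α] {n : ℕ} {φ : L.BoundedFormula α n} (hφ : φ.IsQF)
    (f : φ.freeVarFinset → β) : (φ.restrictFreeVar f).IsQF := by
  induction hφ with
  | falsum => exact .falsum
  | of_isAtomic h =>
    cases h with
    | equal t₁ t₂ => exact (BoundedFormula.IsAtomic.equal _ _).isQF
    | rel R ts => exact (BoundedFormula.IsAtomic.rel _ _).isQF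
  | imp _ _ ih₁ ih₂ => exact (ih₁ _).imp (ih₂ _)

/-- A formula in variables from `β ⊕ α` as a formula in `m + s` bound variables, the first `m` of
which take the place of `β` along `f`, and the last `s` that of `α` along `g`. This is the matrix
of a universal-existential sentence once `f` and `g` enumerate `β` and `α`. -/
def bindSum {m s : ℕ} (f : β → Fin m) (g : α → Fin s) (φ : L.Formula (β ⊕ α)) :
    L.BoundedFormula Empty (m + s) :=
  BoundedFormula.relabel (Sum.inr ∘ Sum.elim (Fin.castAdd s) (Fin.natAdd m) ∘ Sum.map f g) φ

theorem realize_bindSum {m s : ℕ} (f : β → Fin m) (g : α → Fin s) (φ : L.Formula (β ⊕ α))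
    (xs : Fin m → M) (ys : Fin s → M) :
    (bindSum f g φ).Realize default (Fin.append xs ys) ↔
      φ.Realize (Sum.elim (xs ∘ f) (ys ∘ g)) := by
  refine BoundedFormula.realize_relabel.trans ?_
  rw [← Sum.elim_comp_map, ← Fin.append_comp_sumElim (xs := xs), Formula.Realize]
  exact iff_of_eq (congrArg (BoundedFormula.Realize φ _) (Subsingleton.elim _ _))

/-- The free variables of a formula in variables from `β ⊕ α`, as elements of the disjoint union of
those from `β` and those from `α`. Restriction along it reduces infinite tuples of variables to
finite ones. -/
def splitFreeVar [DecidableEq (β ⊕ α)] (φ : L.Formula (β ⊕ α)) :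
    φ.freeVarFinset → φ.freeVarFinset.toLeft ⊕ φ.freeVarFinset.toRight
  | ⟨.inl b, hb⟩ => .inl ⟨b, Finset.mem_toLeft.2 hb⟩
  | ⟨.inr a, ha⟩ => .inr ⟨a, Finset.mem_toRight.2 ha⟩

theorem realize_restrictFreeVar_splitFreeVar [DecidableEq (β ⊕ α)] (φ : L.Formula (β ⊕ α))
    (x : β → M) (y : α → M) :
    Formula.Realize (φ.restrictFreeVar (splitFreeVar φ))
        (Sum.elim (x ∘ Subtype.val) (y ∘ Subtype.val)) ↔
      φ.Realize (Sum.elim x y) :=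
  BoundedFormula.realize_restrictFreeVar _ fun | ⟨.inl _, _⟩ => rfl | ⟨.inr _, _⟩ => rfl

end Formulas

section Embeddings

variable {L : FirstOrder.Language.{u, v}} {γ : Type*}

theorem exists_embedding_of_realize_imp {P Q : Type*} [L.Structure P] [L.Structure Q]
    {p : γ → P} (hp : Function.Surjective p) {q : γ → Q}
    (h : ∀ φ : L.Formula γ, φ.IsQF → φ.Realize p → φ.Realize q) :
    ∃ f : P ↪[L] Q, ∀ c, f (p c) = q c := by
  have realize_iff (φ : L.Formula γ) (hφ : φ.IsQF) : φ.Realize p ↔ φ.Realize q :=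
    ⟨h φ hφ, not_imp_not.1 (h φ.not hφ.not)⟩
  have term_eq_iff (t₁ t₂ : L.Term γ) : t₁.realize p = t₂.realize p ↔
      t₁.realize q = t₂.realize q := by
    simpa only [Formula.realize_equal] using
      realize_iff (t₁.equal t₂) (BoundedFormula.IsAtomic.equal _ _).isQF
  have eq_iff (c d : γ) : p c = p d ↔ q c = q d := term_eq_iff (.var c) (.var d)
  let f : P → Q := fun a => q (Function.surjInv hp a)
  have f_apply (c : γ) : f (p c) = q c := (eq_iff _ _).1 (Function.surjInv_eq hp (p c))
  refine ⟨⟨⟨f, ?_⟩, ?_, ?_⟩, f_apply⟩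
  · refine hp.forall₂.2 fun c d hcd => (eq_iff c d).2 ?_
    rwa [f_apply, f_apply] at hcd
  · intro n F a
    obtain ⟨c, rfl⟩ := hp.comp_left a
    obtain ⟨d, hd⟩ := hp (Structure.funMap F (p ∘ c))
    have funMap_eq := (term_eq_iff (.var d) (.func F fun i => .var (c i))).1 hd
    change f (Structure.funMap F (p ∘ c)) = Structure.funMap F (f ∘ p ∘ c)
    rw [← hd, f_apply, ← Function.comp_assoc, show f ∘ p = q from funext f_apply]
    exact funMap_eq
  · intro n R a
    obtain ⟨c, rfl⟩ := hp.comp_left a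
    have relMap_iff := realize_iff (R.formula fun i => .var (c i))
      (BoundedFormula.IsAtomic.rel _ _).isQF
    simp only [Formula.realize_rel, Term.realize_var] at relMap_iff
    change Structure.RelMap R (f ∘ p ∘ c) ↔ _
    rw [← Function.comp_assoc, show f ∘ p = q from funext f_apply]
    exact relMap_iff.symm

theorem exists_embedding_ultraproduct {X I : Type*} {A : X → Type*} {C : I → Type*}
    [∀ x, L.Structure (A x)] [∀ i, L.Structure (C i)] [∀ x, Nonempty (A x)] [∀ i, Nonempty (C i)]
    {U : Ultrafilter X} {V : Ultrafilter I} {p : γ → ∀ x, A x} (hp : Function.Surjective p)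
    {q : γ → ∀ i, C i}
    (h : ∀ φ : L.Formula γ, φ.IsQF →
      (∀ᶠ x in U, φ.Realize fun c => p c x) → ∀ᶠ i in V, φ.Realize fun c => q c i) :
    ∃ f : (U : Filter X).Product A ↪[L] (V : Filter I).Product C,
      ∀ c, f (p c : (U : Filter X).Product A) = (q c : (V : Filter I).Product C) :=
  exists_embedding_of_realize_imp (Quotient.mk''_surjective.comp hp) fun φ hφ hU =>
    (Ultraproduct.realize_formula_cast φ q).2
      (h φ hφ ((Ultraproduct.realize_formula_cast φ p).1 hU))

/-- The diagonal elementary embedding of a structure in an ultrapower of it. -/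
def ultrapowerDiagonal {M I : Type*} [L.Structure M] [Nonempty M] (U : Ultrafilter I) :
    M ↪ₑ[L] (U : Filter I).Product (fun _ => M) where
  toFun a := Quotient.mk'' fun _ => a
  map_formula' n φ a := by
    have realize_iff := Ultraproduct.realize_formula_cast (u := U) φ fun k _ => a k
    rwa [eventually_const] at realize_iff

theorem exists_equiv_ulift (L : FirstOrder.Language.{u, v}) (M : Type w) [L.Structure M] :
    ∃ (M' : Type (max w x)) (_ : L.Structure M'), Nonempty (M ≃[L] M') :=
  let e : M ≃ ULift.{x} M := Equiv.ulift.symm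
  ⟨ULift M, e.inducedStructure, ⟨e.inducedStructureEquiv⟩⟩

end Embeddings

namespace AETheorySub

variable {L : FirstOrder.Language.{u, v}} {M : Type w} {N : Type x} [L.Structure M] [L.Structure N]
  {β α : Type*}

theorem exists_realize_of_finite [Finite β] [Finite α] (h : AETheorySub L M N)
    {φ : L.Formula (β ⊕ α)} (hφ : φ.IsQF)
    (hM : ∀ x : β → M, ∃ y : α → M, φ.Realize (Sum.elim x y)) (b : β → N) :
    ∃ y : α → N, φ.Realize (Sum.elim b y) := by
  obtain ⟨m, ⟨eβ⟩⟩ := Finite.exists_equiv_fin β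
  obtain ⟨s, ⟨eα⟩⟩ := Finite.exists_equiv_fin α
  let ψ := bindSum eβ eα φ
  have sentence_M : M ⊨ (ψ.exsN.alls : L.Sentence) := by
    refine (realize_alls_exsN ψ).2 fun xs => ?_
    obtain ⟨y, hy⟩ := hM (xs ∘ eβ)
    refine ⟨y ∘ eα.symm, (realize_bindSum eβ eα φ _ _).2 ?_⟩
    rwa [Function.comp_assoc, eα.symm_comp_self, Function.comp_id]
  obtain ⟨ys, hys⟩ := (realize_alls_exsN ψ).1 (h m s ψ (hφ.relabel _) sentence_M) (b ∘ eβ.symm)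
  refine ⟨ys ∘ eα, ?_⟩
  rwa [realize_bindSum, Function.comp_assoc, eβ.symm_comp_self, Function.comp_id] at hys

theorem isEmpty_iff (h : AETheorySub L M N) : IsEmpty M ↔ IsEmpty N := by
  constructor
  · intro hM
    refine ⟨fun b => ?_⟩
    obtain ⟨_, hfalse⟩ := h.exists_realize_of_finite (β := Unit) (α := Empty)
      BoundedFormula.isQF_bot (fun x => isEmptyElim (x ())) fun _ => b
    exact hfalse
  · refine fun hN => ⟨fun a => ?_⟩
    obtain ⟨y, -⟩ := h.exists_realize_of_finite (β := Empty) (α := Unit)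
      BoundedFormula.IsQF.top (fun _ => ⟨fun _ => a, Formula.realize_top.2 trivial⟩) isEmptyElim
    exact isEmptyElim (y ())

theorem nonempty_embedding_of_isEmpty [IsEmpty M] (h : AETheorySub L M N) :
    Nonempty (M ↪[L] N) := by
  have surjective (p : Empty ⊕ Empty → M) : Function.Surjective p := isEmptyElim
  obtain ⟨f, -⟩ := exists_embedding_of_realize_imp (L := L) (surjective isEmptyElim)
    (q := (Sum.elim isEmptyElim isEmptyElim : Empty ⊕ Empty → N)) fun φ hφ hM => by
      obtain ⟨y, hy⟩ := h.exists_realize_of_finite hφ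
        (fun x => ⟨isEmptyElim, by convert hM⟩) isEmptyElim
      convert hy
  exact ⟨f⟩

section Nonempty

variable [Nonempty M] [Nonempty N]

theorem exists_realize (h : AETheorySub L M N) {φ : L.Formula (β ⊕ α)} (hφ : φ.IsQF)
    (hM : ∀ x : β → M, ∃ y : α → M, φ.Realize (Sum.elim x y)) (b : β → N) :
    ∃ y : α → N, φ.Realize (Sum.elim b y) := by
  classical
  have hM_restrict (x : φ.freeVarFinset.toLeft → M) : ∃ y : φ.freeVarFinset.toRight → M,
      Formula.Realize (φ.restrictFreeVar (splitFreeVar φ)) (Sum.elim x y) := by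
    obtain ⟨x, rfl⟩ := Subtype.val_injective.surjective_comp_right x
    obtain ⟨y, hy⟩ := hM x
    exact ⟨_, (realize_restrictFreeVar_splitFreeVar φ x y).2 hy⟩
  obtain ⟨y, hy⟩ := h.exists_realize_of_finite (isQF_restrictFreeVar hφ _) hM_restrict
    (b ∘ Subtype.val)
  obtain ⟨y, rfl⟩ := Subtype.val_injective.surjective_comp_right y
  exact ⟨y, (realize_restrictFreeVar_splitFreeVar φ b y).1 hy⟩

theorem exists_forall_realize_imp (h : AETheorySub L M N) (t : (β → M) → α → M)
    (Φ : Finset {φ : L.Formula (β ⊕ α) // φ.IsQF}) (b : β → N) :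
    ∃ (x : β → M) (y : α → N), ∀ φ ∈ Φ,
      φ.1.Realize (Sum.elim x (t x)) → φ.1.Realize (Sum.elim b y) := by
  let truth (x : β → M) : Set Φ := {φ | φ.1.1.Realize (Sum.elim x (t x))}
  let χ : L.Formula (β ⊕ α) := BoundedFormula.iSup fun S : Set.range truth =>
    BoundedFormula.iInf fun φ : S.1 => φ.1.1.1
  have hχ : χ.IsQF := isQF_iSup fun _ => isQF_iInf fun φ => φ.1.1.2
  have realize_χ (x : β → M) : χ.Realize (Sum.elim x (t x)) :=
    BoundedFormula.realize_iSup.2 ⟨⟨truth x, x, rfl⟩, BoundedFormula.realize_iInf.2 fun φ => φ.2⟩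
  obtain ⟨y, hy⟩ := h.exists_realize hχ (fun x => ⟨t x, realize_χ x⟩) b
  obtain ⟨⟨_, x, rfl⟩, hx⟩ := BoundedFormula.realize_iSup.1 hy
  exact ⟨x, y, fun φ hφ hM => BoundedFormula.realize_iInf.1 hx ⟨⟨φ, hφ⟩, hM⟩⟩

theorem exists_ultrafilter_eventually_realize_imp {β : Type y} {α : Type z} (h : AETheorySub L M N)
    (t : (β → M) → α → M) :
    ∃ (I : Type (max u v y z)) (V : Ultrafilter I) (ξ : I → (β → N) → β → M)
      (η : I → (β → N) → α → N), ∀ φ : L.Formula (β ⊕ α), φ.IsQF → ∀ᶠ i in V, ∀ b,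
        φ.Realize (Sum.elim (ξ i b) (t (ξ i b))) → φ.Realize (Sum.elim b (η i b)) := by
  choose ξ η hη using h.exists_forall_realize_imp t
  refine ⟨_, Ultrafilter.of atTop, ξ, η, fun φ hφ => Ultrafilter.of_le atTop ?_⟩
  filter_upwards [eventually_ge_atTop {⟨φ, hφ⟩}] with Φ hΦ b
  exact hη Φ b ⟨φ, hφ⟩ (Finset.singleton_subset_iff.1 hΦ)

theorem exists_elementaryEmbedding_forall_tuple (h : AETheorySub L M N) (β : Type z) :
    ∃ (N' : Type (max u v w x z)) (_ : L.Structure N') (_ : N ↪ₑ[L] N'),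
      ∀ b : β → N', ∃ (M' : Type (max w z)) (_ : L.Structure M') (_ : M ↪ₑ[L] M')
        (f : M' ↪[L] N'), Set.range b ⊆ Set.range f := by
  obtain ⟨I, V, ξ, η, realize_imp⟩ :=
    h.exists_ultrafilter_eventually_realize_imp fun x (g : (β → M) → M) => g x
  refine ⟨(V : Filter I).Product fun _ => N, inferInstance, ultrapowerDiagonal V, fun b => ?_⟩
  obtain ⟨r, rfl⟩ := Quotient.mk''_surjective.comp_left b
  let U : Ultrafilter (β → M) := V.map fun i => ξ i (r · i)
  let p : β ⊕ ((β → M) → M) → (β → M) → M := Sum.elim (fun k x => x k) id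
  let q : β ⊕ ((β → M) → M) → I → N := Sum.elim r fun g i => η i (r · i) g
  have hp : Function.Surjective p := fun g => ⟨.inr g, rfl⟩
  have p_apply (x : β → M) : (p · x) = Sum.elim x fun g => g x := by
    ext (_ | _) <;> rfl
  have q_apply (i : I) : (q · i) = Sum.elim (r · i) (η i (r · i)) := by
    ext (_ | _) <;> rfl
  obtain ⟨f, hf⟩ := exists_embedding_ultraproduct (U := U) (V := V) hp (q := q) fun φ hφ hU => by
    filter_upwards [realize_imp φ hφ, eventually_map.1 hU] with i hi hM
    rw [p_apply] at hM
    rw [q_apply]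
    exact hi _ hM
  refine ⟨(U : Filter (β → M)).Product fun _ => M, inferInstance, ultrapowerDiagonal U, f, ?_⟩
  rintro _ ⟨k, rfl⟩
  exact ⟨_, hf (.inl k)⟩

end Nonempty

theorem exists_elementaryEmbedding_forall_countable (h : AETheorySub L M N) :
    ∃ (N' : Type (max u v w x)) (_ : L.Structure N') (_ : N ↪ₑ[L] N'),
      ∀ B : Set N', B.Countable →
        ∃ (M' : Type (max u v w x)) (_ : L.Structure M') (_ : M ↪ₑ[L] M')
          (f : M' ↪[L] N'), B ⊆ Set.range f := by
  rcases isEmpty_or_nonempty M with hM | hM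
  · have : IsEmpty N := h.isEmpty_iff.1 hM
    obtain ⟨f⟩ := h.nonempty_embedding_of_isEmpty
    obtain ⟨M', _, ⟨eM⟩⟩ := exists_equiv_ulift.{u, v, w, max u v x} L M
    obtain ⟨N', _, ⟨eN⟩⟩ := exists_equiv_ulift.{u, v, x, max u v w} L N
    exact ⟨N', _, eN.toElementaryEmbedding, fun B _ => ⟨M', _, eM.toElementaryEmbedding,
      eN.toEmbedding.comp (f.comp eM.symm.toEmbedding), fun b => isEmptyElim (eN.symm b)⟩⟩
  · have : Nonempty N := not_isEmpty_iff.1 (mt h.isEmpty_iff.2 (not_isEmpty_of_nonempty M))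
    obtain ⟨N', _, j, hcover⟩ :=
      h.exists_elementaryEmbedding_forall_tuple (ULift.{max u v w x} ℕ)
    have : Nonempty N' := ‹Nonempty N›.map j
    refine ⟨N', _, j, fun B hB => ?_⟩
    obtain ⟨b, hBb⟩ := Set.countable_iff_exists_subset_range.1 hB
    obtain ⟨M', _, i, f, hbf⟩ := hcover (b ∘ ULift.down)
    exact ⟨M', _, i, f, (ULift.down_surjective.range_comp b ▸ hBb).trans hbf⟩

theorem of_forall_finset
    (hcover : ∀ B : Finset N, ∃ (M' : Type z) (_ : L.Structure M') (_ : M ↪ₑ[L] M')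
      (f : M' ↪[L] N), ↑B ⊆ Set.range f) : AETheorySub L M N := by
  classical
  intro m s ψ hψ hM
  refine (realize_alls_exsN ψ).2 fun b => ?_
  obtain ⟨M', _, i, f, hf⟩ := hcover (Finset.univ.image b)
  choose a ha using fun k => hf (Finset.mem_coe.2 (Finset.mem_image_of_mem b (Finset.mem_univ k)))
  rw [i.map_sentence, realize_alls_exsN] at hM
  obtain ⟨c, hc⟩ := hM a
  refine ⟨f ∘ c, ?_⟩
  have append_eq : f ∘ Fin.append a c = Fin.append b (f ∘ c) :=
    funext <| Fin.addCases (by simp [ha]) (by simp)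
  rwa [← append_eq, ← Subsingleton.elim (f ∘ default) default, hψ.realize_embedding]

end AETheorySub

/-- `Th_{∀∃}(M) ⊆ Th_{∀∃}(N)` iff there is an elementary extension `N*` of `N`
such that for every finite subset `B ⊆ N*` there are an elementary extension `M_B ≽ M` and an
embedding `f_B : M_B ↪ N*` whose image contains `B`. -/
theorem stmt4 {L : FirstOrder.Language.{u, v}} {M : Type w} {N : Type x}
    [L.Structure M] [L.Structure N] :
    AETheorySub L M N ↔
      ∃ (N' : Type (max u v w x)) (_ : L.Structure N') (_ : N ↪ₑ[L] N'),
        ∀ B : Finset N',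
          ∃ (MB : Type (max u v w x)) (_ : L.Structure MB) (_ : M ↪ₑ[L] MB)
            (f : MB ↪[L] N'), ↑B ⊆ Set.range f := by
  constructor
  · intro h
    obtain ⟨N', _, j, hcover⟩ := h.exists_elementaryEmbedding_forall_countable
    exact ⟨N', _, j, fun B => hcover B B.countable_toSet⟩
  · rintro ⟨N', _, j, hcover⟩ m s ψ hψ hM
    exact (j.map_sentence _).2 (AETheorySub.of_forall_finset hcover m s ψ hψ hM)
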